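/- Define t_n(x) = Σ_{k=0}^n C(n,k)*C(x,k)*C(x+k,k)*2^k. For any odd prime p and p-adic integer x with 2x ≡ −1 (mod p), Σ_{n=0}^{p-1} (n+1)·t_n(x)^2 ≡ p/4 + (3/8)·(−1/p) (mod p^2), where (−1/p) = (−1)^((p−1)/2). -/

import Mathlib

/-- Generalized binomial coefficient `C(x, k) = x(x-1)⋯(x-k+1)/k!` in `ℚ_[p]`. -/
noncomputable def gbinom {p : ℕ} [Fact p.Prime] (x : ℚ_[p]) (k : ℕ) : ℚ_[p] :=
  (∏ i ∈ Finset.range k, (x - i)) / (k.factorial : ℚ_[p])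

/-- The sequence `t_n(x) = ∑_{k=0}^n C(n,k) C(x,k) C(x+k,k) 2^k`. -/
noncomputable def tseq {p : ℕ} [Fact p.Prime] (x : ℚ_[p]) (n : ℕ) : ℚ_[p] :=
  ∑ k ∈ Finset.range (n+1), (n.choose k : ℚ_[p]) * gbinom x k * gbinom (x + (k : ℚ_[p])) k * 2^k

/-- Binomial transform. -/
def bt {R : Type*} [CommRing R] (f : ℕ → R) (n : ℕ) : R :=
  ∑ k ∈ Finset.range (n+1), (n.choose k : R) * f k

lemma bt_zero {R : Type*} [CommRing R] (f : ℕ → R) : bt f 0 = f 0 := by simp [bt]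

lemma bt_succ {R : Type*} [CommRing R] (f : ℕ → R) (n : ℕ) :
    bt f (n+1) = bt f n + bt (fun k => f (k+1)) n := by
  unfold bt
  rw [Finset.sum_range_succ' _ (n+1)]
  simp only [Nat.choose_succ_succ, Nat.cast_add, add_mul, Finset.sum_add_distrib]
  have h : ∑ k ∈ Finset.range (n+1), (n.choose k : R) * f k
      = ∑ k ∈ Finset.range (n+1), (n.choose (k+1) : R) * f (k+1) + f 0 := by
    have h1 := Finset.sum_range_succ (fun k => (n.choose k : R) * f k) (n+1)
    rw [Finset.sum_range_succ'] at h1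
    simp at h1
    exact h1.symm
  rw [h]
  simp
  ring

lemma bt_add {R : Type*} [CommRing R] (f g : ℕ → R) (n : ℕ) :
    bt (fun k => f k + g k) n = bt f n + bt g n := by
  simp [bt, mul_add, Finset.sum_add_distrib]

lemma bt_sub {R : Type*} [CommRing R] (f g : ℕ → R) (n : ℕ) :
    bt (fun k => f k - g k) n = bt f n - bt g n := by
  simp [bt, mul_sub, Finset.sum_sub_distrib]

lemma bt_smul {R : Type*} [CommRing R] (c : R) (f : ℕ → R) (n : ℕ) :
    bt (fun k => c * f k) n = c * bt f n := by
  simp only [bt, Finset.mul_sum]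
  exact Finset.sum_congr rfl fun k _ => by ring

lemma bt_diff {R : Type*} [CommRing R] (f : ℕ → R) (n : ℕ) :
    ((n : R) + 1) * (bt f (n+1) - bt f n) = bt (fun k => (k : R) * f k) (n+1) := by
  rw [bt_succ f n, add_sub_cancel_left]
  unfold bt
  rw [Finset.sum_range_succ' _ (n+1), Finset.mul_sum]
  simp only [Nat.cast_zero, zero_mul, mul_zero, add_zero]
  refine Finset.sum_congr rfl fun k _ => ?_
  have h : ((n : R) + 1) * (n.choose k : R) = ((n+1).choose (k+1) : R) * ((k+1 : ℕ) : R) := by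
    exact_mod_cast congrArg (Nat.cast (R := R)) (Nat.add_one_mul_choose_eq n k)
  rw [← mul_assoc, ← mul_assoc, h]

/-- `C(j,k) C(j+k,k) 2^k` -/
def cc (j k : ℕ) : ℤ := (j.choose k : ℤ) * ((j+k).choose k : ℤ) * 2^k

lemma cc_zero (j : ℕ) : cc j 0 = 1 := by simp [cc]

lemma cc_rec (j k : ℕ) :
    ((k : ℤ)+1)^2 * cc j (k+1) = 2 * ((j:ℤ)*(j+1) - k*(k+1)) * cc j k := by
  have h1 : (j.choose (k+1) : ℤ) * (k+1) = (j.choose k : ℤ) * ((j:ℤ) - k) := by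
    rcases le_or_gt k j with h | h
    · have := congrArg (Nat.cast (R := ℤ)) (Nat.choose_succ_right_eq j k)
      push_cast [Nat.cast_sub h] at this
      exact this
    · rw [Nat.choose_eq_zero_of_lt h, Nat.choose_eq_zero_of_lt (by omega)]; simp
  have h2 : ((j:ℤ)+k+1) * ((j+k).choose k : ℤ) = ((j+(k+1)).choose (k+1) : ℤ) * (k+1) := by
    exact_mod_cast congrArg (Nat.cast (R := ℤ)) (Nat.add_one_mul_choose_eq (j+k) k)
  unfold cc
  rw [pow_succ]
  calc _ = ((j.choose (k+1) : ℤ) * (k+1)) * (((j+(k+1)).choose (k+1) : ℤ) * (k+1)) * (2^k*2) := by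
        ring
    _ = _ := by rw [h1, ← h2]; ring

lemma cc_step (j k : ℕ) :
    ((j:ℤ)+1+k) * cc j k = ((j:ℤ)+1-k) * cc (j+1) k := by
  induction k with
  | zero => simp [cc_zero]
  | succ k ih =>
    have h1 := cc_rec j k
    have h2 := cc_rec (j+1) k
    have h0 : ((k:ℤ)+1)^2 ≠ 0 := by positivity
    apply mul_left_cancel₀ h0
    push_cast at *
    linear_combination ((j:ℤ)+1+(k+1)) * h1 - ((j:ℤ)+1-(k+1)) * h2
      + 2*((j:ℤ)+k+2)*(j-k) * ih

lemma cc_AD (j k : ℕ) :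
    (k:ℤ) * (cc (j+1) k + cc j k) = ((j:ℤ)+1) * (cc (j+1) k - cc j k) := by
  linear_combination cc_step j k

lemma cc_DA (j k : ℕ) :
    ((k:ℤ)+1) * (cc (j+1) (k+1) - cc j (k+1)) =
      2 * (((j:ℤ)+1) * (cc (j+1) k + cc j k) - k * (cc (j+1) k - cc j k)) := by
  have h1 := cc_rec j k
  have h2 := cc_rec (j+1) k
  have h3 := cc_AD j k
  have h0 : ((k:ℤ)+1) ≠ 0 := by positivity
  apply mul_left_cancel₀ h0
  push_cast at *
  linear_combination h2 - h1 - 2*((j:ℤ)+1)*h3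

/-- `t_n(j)` as an integer. -/
def TT (j n : ℕ) : ℤ := bt (cc j) n

/-- auxiliary sequence -/
def EE (j n : ℕ) : ℤ := bt (fun k => (k:ℤ) * (cc (j+1) k - cc j k)) n

lemma TT_zero (j : ℕ) : TT j 0 = 1 := by simp [TT, bt_zero, cc_zero]

lemma EE_zero (j : ℕ) : EE j 0 = 0 := by simp [EE, bt_zero]

lemma TT_a (j n : ℕ) : ((n:ℤ)+1) * ((TT (j+1) (n+1) + TT j (n+1)) - (TT (j+1) n + TT j n))
    = ((j:ℤ)+1) * (TT (j+1) (n+1) - TT j (n+1)) := by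
  have h := bt_diff (fun k => cc (j+1) k + cc j k) n
  simp only [cc_AD] at h
  rw [bt_smul, bt_sub, bt_add, bt_add] at h
  exact h

lemma TT_d (j n : ℕ) : ((n:ℤ)+1) * ((TT (j+1) (n+1) - TT j (n+1)) - (TT (j+1) n - TT j n))
    = EE j (n+1) := by
  have h := bt_diff (fun k => cc (j+1) k - cc j k) n
  rw [bt_sub, bt_sub] at h
  exact h

lemma EE_succ (j n : ℕ) : EE j (n+1) = 2 * ((j:ℤ)+1) * (TT (j+1) n + TT j n) - EE j n := by
  unfold EE
  rw [bt_succ]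
  have h : bt (fun k => ((k+1:ℕ):ℤ) * (cc (j+1) (k+1) - cc j (k+1))) n
      = 2 * ((j:ℤ)+1) * (TT (j+1) n + TT j n)
        - 2 * bt (fun k => (k:ℤ) * (cc (j+1) k - cc j k)) n := by
    unfold TT
    rw [← bt_add, ← bt_smul, ← bt_smul, ← bt_sub]
    congr 1
    funext k
    push_cast
    rw [cc_DA]
    ring
  rw [h]; ring

/-- first telescoping -/
lemma tel1 (x : ℚ) (hx : x ≠ 0) (a d e : ℕ → ℚ) (hd0 : d 0 = 0) (he0 : e 0 = 0)
    (he : ∀ n, e (n+1) = 2*x*a n - e n)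
    (hd : ∀ n : ℕ, ((n:ℚ)+1) * (d (n+1) - d n) = e (n+1))
    (ha : ∀ n : ℕ, ((n:ℚ)+1) * (a (n+1) - a n) = x * d (n+1)) (N : ℕ) :
    4*x*∑ n ∈ Finset.range N, (x * (a n^2 + d n^2) + a n * d n)
      = 4*x*N*a N*d N - 4*x^2*d N^2 - e N^2 := by
  induction N with
  | zero => simp [hd0, he0]
  | succ n ih =>
    rw [Finset.sum_range_succ, mul_add, ih]
    have hn : ((n:ℚ)+1) ≠ 0 := by positivity
    have h1 : d (n+1) = d n + e (n+1) / (n+1) := by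
      field_simp; linear_combination hd n
    have h2 : a (n+1) = a n + x * d (n+1) / (n+1) := by
      field_simp; linear_combination ha n
    rw [h2, h1, he n]
    push_cast
    field_simp
    ring

lemma tel2 (x : ℚ) (hx : x ≠ 0) (a d e : ℕ → ℚ) (hd0 : d 0 = 0) (he0 : e 0 = 0)
    (he : ∀ n, e (n+1) = 2*x*a n - e n)
    (hd : ∀ n : ℕ, ((n:ℚ)+1) * (d (n+1) - d n) = e (n+1))
    (ha : ∀ n : ℕ, ((n:ℚ)+1) * (a (n+1) - a n) = x * d (n+1)) (N : ℕ) :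
    2*x*∑ n ∈ Finset.range N, ((x^2-1)*(8*n+4+4*x^2) * (a n * d n))
      = 2*x*(2*x*N^2*a N^2 - (4*x^2*N+4*N^2)*(a N*d N)
        + (2*x^3+(2*x^3+2*x)*N+2*x*N^2)*d N^2
        + 2*N*a N*e N - (2*x^3+2*x*N)*d N*e N) + e N^2 := by
  induction N with
  | zero => simp [hd0, he0]
  | succ n ih =>
    rw [Finset.sum_range_succ, mul_add, ih]
    have hn : ((n:ℚ)+1) ≠ 0 := by positivity
    have h1 : d (n+1) = d n + e (n+1) / (n+1) := by
      field_simp; linear_combination hd n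
    have h2 : a (n+1) = a n + x * d (n+1) / (n+1) := by
      field_simp; linear_combination ha n
    rw [h2, h1, he n]
    push_cast
    field_simp
    ring

/-- Sum of squares. -/
def SS (N j : ℕ) : ℤ := ∑ n ∈ Finset.range N, (TT j n)^2

def VV (N j : ℕ) : ℤ := ∑ n ∈ Finset.range N, (8*(n:ℤ)+5)*(TT j n)^2

lemma SS_tel (N j : ℕ) :
    4*((j:ℤ)+1)*((2*j+3)*SS N (j+1) + (2*j+1)*SS N j)
      = 4*((j:ℤ)+1)*N*(TT (j+1) N + TT j N)*(TT (j+1) N - TT j N)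
        - 4*((j:ℤ)+1)^2*(TT (j+1) N - TT j N)^2 - (EE j N)^2 := by
  have h := tel1 ((j:ℚ)+1) (by positivity) (fun n => ((TT (j+1) n + TT j n : ℤ):ℚ))
    (fun n => ((TT (j+1) n - TT j n : ℤ):ℚ)) (fun n => ((EE j n : ℤ):ℚ))
    (by simp [TT_zero]) (by simp [EE_zero])
    (fun n => by rw [EE_succ]; push_cast; ring)
    (fun n => by have := TT_d j n; exact_mod_cast this)
    (fun n => by have := TT_a j n; exact_mod_cast this) N
  have h2 : (2*(j:ℤ)+3)*SS N (j+1) + (2*j+1)*SS N j =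
      ∑ n ∈ Finset.range N, (((j:ℤ)+1) * ((TT (j+1) n + TT j n)^2 + (TT (j+1) n - TT j n)^2)
        + (TT (j+1) n + TT j n) * (TT (j+1) n - TT j n)) := by
    unfold SS
    rw [Finset.mul_sum, Finset.mul_sum, ← Finset.sum_add_distrib]
    exact Finset.sum_congr rfl fun n _ => by ring
  rw [h2]
  exact_mod_cast h

lemma VV_tel (N j : ℕ) :
    2*((j:ℤ)+1)*((((j:ℤ)+1)^2-1)*(VV N (j+1) - VV N j
        - (1-4*((j:ℤ)+1)^2)*(SS N (j+1) - SS N j)))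
      = 2*((j:ℤ)+1)*(2*((j:ℤ)+1)*N^2*(TT (j+1) N + TT j N)^2
          - (4*((j:ℤ)+1)^2*N+4*N^2)*((TT (j+1) N + TT j N)*(TT (j+1) N - TT j N))
        + (2*((j:ℤ)+1)^3+(2*((j:ℤ)+1)^3+2*((j:ℤ)+1))*N+2*((j:ℤ)+1)*N^2)*(TT (j+1) N - TT j N)^2
        + 2*N*(TT (j+1) N + TT j N)*EE j N
        - (2*((j:ℤ)+1)^3+2*((j:ℤ)+1)*N)*(TT (j+1) N - TT j N)*EE j N) + (EE j N)^2 := by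
  have h := tel2 ((j:ℚ)+1) (by positivity) (fun n => ((TT (j+1) n + TT j n : ℤ):ℚ))
    (fun n => ((TT (j+1) n - TT j n : ℤ):ℚ)) (fun n => ((EE j n : ℤ):ℚ))
    (by simp [TT_zero]) (by simp [EE_zero])
    (fun n => by rw [EE_succ]; push_cast; ring)
    (fun n => by have := TT_d j n; exact_mod_cast this)
    (fun n => by have := TT_a j n; exact_mod_cast this) N
  have h2 : (((j:ℤ)+1)^2-1)*(VV N (j+1) - VV N j
        - (1-4*((j:ℤ)+1)^2)*(SS N (j+1) - SS N j)) =
      ∑ n ∈ Finset.range N, ((((j:ℤ)+1)^2-1)*(8*n+4+4*((j:ℤ)+1)^2)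
        * ((TT (j+1) n + TT j n) * (TT (j+1) n - TT j n))) := by
    unfold SS VV
    rw [← Finset.sum_sub_distrib, ← Finset.sum_sub_distrib, Finset.mul_sum,
      ← Finset.sum_sub_distrib, Finset.mul_sum]
    exact Finset.sum_congr rfl fun n _ => by ring
  rw [h2]
  exact_mod_cast h

lemma bt_congr {R : Type*} [CommRing R] {f g : ℕ → R} {n : ℕ} (h : ∀ k ≤ n, f k = g k) :
    bt f n = bt g n := by
  unfold bt
  refine Finset.sum_congr rfl fun k hk => ?_
  rw [h k (by simp at hk; omega)]

lemma bt_delta {R : Type*} [CommRing R] (n : ℕ) :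
    bt (fun k => if k = 0 then (1:R) else 0) n = 1 := by
  unfold bt
  rw [Finset.sum_range_succ']
  simp

lemma bt_pow {R : Type*} [CommRing R] (n : ℕ) :
    bt (fun k => (-2:R)^k) n = (-1)^n := by
  have h := add_pow (-2:R) 1 n
  have h2 : (-2:R) + 1 = -1 := by ring
  rw [h2] at h
  rw [h]
  unfold bt
  exact Finset.sum_congr rfl fun k _ => by simp [mul_comm]

lemma cast_bt {R : Type*} [CommRing R] (f : ℕ → ℤ) (n : ℕ) :
    ((bt f n : ℤ) : R) = bt (fun k => ((f k : ℤ) : R)) n := by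
  unfold bt
  push_cast
  rfl

lemma SS_last_ring {R : Type*} [CommRing R] (p r : ℕ) (hp : p = 2*r+1) (hr : 1 ≤ r)
    (hpi : (p:R)^3 = 0) (i : ℕ → R) (hi0 : i 0 = 0)
    (hi : ∀ k, 1 ≤ k → k < p → (k:R) * i k = 1) :
    ((SS p (p-1) : ℤ) : R) = -(p:R) - 2*(p:R)^2 := by
  have hc : ∀ k, k + 1 < p → ((cc (p-1) (k+1) : ℤ) : R)
      = (-2)^(k+1) * ((p:R) * i (k+1) - (p:R)^2 * (i (k+1))^2) := by
    have hrec : ∀ k : ℕ, ((k : R)+1)^2 * ((cc (p-1) (k+1) : ℤ) : R)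
        = 2 * ((p:R)^2 - p - k*(k+1)) * ((cc (p-1) k : ℤ) : R) := by
      intro k
      have h := congrArg (Int.cast (R := R)) (cc_rec (p-1) k)
      have hc : (((p-1:ℕ):ℤ):R) = (p:R) - 1 := by
        rw [hp]; push_cast; simp
      push_cast at h
      have hc' : ((p-1:ℕ):R) = (p:R) - 1 := by
        rw [hp]; push_cast; simp
      rw [hc'] at h
      rw [h]; ring
    intro k
    induction k with
    | zero =>
      intro h
      have h1 := hrec 0
      have h2 := hi 1 le_rfl h
      rw [cc_zero] at h1
      push_cast at h1 h2
      rw [one_mul] at h2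
      rw [h2]
      simp at h1 ⊢
      rw [h1]; ring
    | succ k ih =>
      intro h
      have ih := ih (by omega)
      have h1 := hrec (k+1)
      have h2 := hi (k+1) (by omega) (by omega)
      have h3 := hi (k+1+1) (by omega) (by omega)
      rw [ih] at h1
      push_cast at h1 h2 h3
      have h4 : ((k:R)+1+1) * i (k+1+1) = 1 := by
        linear_combination h3
      generalize i (k+1+1) = u at *
      generalize i (k+1) = v at *
      generalize ((cc (p-1) (k+1+1) : ℤ) : R) = C at *
      have h5 : C = (u^2) * (((k:R)+1+1)^2 * C) := by
        linear_combination (-C) * (((k:R)+1+1)*u+1) * h4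
      rw [h5, h1]
      have e1 : ((p:R)^2 - p - ((k:R)+1) * ((k:R)+1+1)) * ((p:R) * v - (p:R)^2 * v^2)
         = -((p:R) * ((k:R)+1+1) - (p:R)^2) := by
        linear_combination (v - (p:R) * v^2 + v^2) * hpi +
          (-(p:R)*((k:R)+1+1) + (p:R)^2 * v * ((k:R)+1+1) + (p:R)^2) * h2
      have e2 : u^2 * ((p:R) * ((k:R)+1+1) - (p:R)^2) = (p:R)*u - (p:R)^2*u^2 := by
        linear_combination (p:R) * u * h4
      rw [pow_succ (-2:R) (k+1)]
      linear_combination 2 * u^2 * (-2:R)^(k+1) * e1 - 2*(-2:R)^(k+1) * e2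
  obtain ⟨A, hA⟩ : ∃ A : ℕ → R, A = bt (fun k => (-2)^k * i k) := ⟨_, rfl⟩
  obtain ⟨B, hB⟩ : ∃ B : ℕ → R, B = bt (fun k => (-2)^k * (i k)^2) := ⟨_, rfl⟩
  have hT : ∀ n, n < p → ((TT (p-1) n : ℤ) : R) = 1 + p * A n - (p:R)^2 * B n := by
    intro n hn
    unfold TT
    rw [cast_bt, hA, hB, ← bt_delta (R := R) n, ← bt_smul, ← bt_smul, ← bt_add, ← bt_sub]
    apply bt_congr
    intro k hk
    rcases k with _ | k
    · simp [cc_zero, hi0]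
    · rw [hc k (by omega)]; simp; ring
  have hA0 : A 0 = 0 := by rw [hA, bt_zero]; simp [hi0]
  have hB0 : B 0 = 0 := by rw [hB, bt_zero]; simp [hi0]
  have hAs : ∀ n, n + 1 < p → ((n:R)+1) * (A (n+1) - A n) = (-1)^(n+1) - 1 := by
    intro n hn
    rw [hA, bt_diff, ← bt_pow, ← bt_delta (R := R) (n+1), ← bt_sub]
    apply bt_congr
    intro k hk
    rcases k with _ | k
    · simp
    · have := hi (k+1) (by omega) (by omega)
      simp only [Nat.add_eq_zero_iff, one_ne_zero, and_false, if_false, sub_zero]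
      linear_combination (-2:R)^(k+1) * this
  have hBs : ∀ n, n + 1 < p → ((n:R)+1) * (B (n+1) - B n) = A (n+1) := by
    intro n hn
    rw [hB, bt_diff, hA]
    apply bt_congr
    intro k hk
    rcases k with _ | k
    · simp [hi0]
    · have := hi (k+1) (by omega) (by omega)
      linear_combination (-2:R)^(k+1) * i (k+1) * this
  have hsum : ∀ s, 2*s < p →
      (∑ n ∈ Finset.range (2*s+1), A n = (2*s+1) * A (2*s) + 2*s) ∧
      (∑ n ∈ Finset.range (2*s+1), B n = (2*s+1) * B (2*s) - ∑ n ∈ Finset.range (2*s+1), A n) ∧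
      (∑ n ∈ Finset.range (2*s+1), (A n)^2 = (2*s+1) * (A (2*s))^2
        + 2 * ∑ n ∈ Finset.range (2*s+1), A n - 2 * A (2*s)) := by
    intro s
    induction s with
    | zero => intro _; simp [hA0, hB0]
    | succ s ih =>
      intro hs
      obtain ⟨q1, q2, q3⟩ := ih (by omega)
      have a1 := hAs (2*s) (by omega)
      have a2 := hAs (2*s+1) (by omega)
      have b1 := hBs (2*s) (by omega)
      have b2 := hBs (2*s+1) (by omega)
      have s1 : (-1:R)^(2*s+1) = -1 := by rw [pow_succ, pow_mul]; simp
      have s2 : (-1:R)^(2*s+1+1) = 1 := by rw [pow_succ, s1]; simp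
      rw [s1] at a1
      rw [s2] at a2
      push_cast at a1 a2 b1 b2
      have e : 2*(s+1) = 2*s+1+1 := by ring
      rw [e]
      simp only [Finset.sum_range_succ _ (2*s+1+1), Finset.sum_range_succ _ (2*s+1)]
      push_cast
      generalize ∑ n ∈ Finset.range (2*s+1), A n = SA at *
      generalize ∑ n ∈ Finset.range (2*s+1), B n = SB at *
      generalize ∑ n ∈ Finset.range (2*s+1), (A n)^2 = SQ at *
      generalize A (2*s+1+1) = A2 at *
      generalize A (2*s+1) = A1 at *
      generalize A (2*s) = A0 at *
      generalize B (2*s+1+1) = B2 at *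
      generalize B (2*s+1) = B1 at *
      generalize B (2*s) = B0 at *
      refine ⟨?_, ?_, ?_⟩
      · linear_combination q1 - a1 - a2
      · linear_combination q2 - b1 - b2
      · linear_combination q3 - a1*(A0+A1) - a2*(A1+A2)
  obtain ⟨q1, q2, q3⟩ := hsum r (by omega)
  rw [← hp] at q1 q2 q3
  have hpr : (2*(r:R)+1) = p := by rw [hp]; push_cast; ring
  rw [hpr] at q1 q2 q3
  have hr2 : 2*(r:R) = p - 1 := by rw [← hpr]; ring
  rw [hr2] at q1
  have hS : ((SS p (p-1) : ℤ) : R) = ∑ n ∈ Finset.range p,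
      (1 + 2*(p:R)*A n + (p:R)^2 * (A n)^2 - 2*(p:R)^2 * B n) := by
    unfold SS
    push_cast
    refine Finset.sum_congr rfl fun n hn => ?_
    rw [hT n (by simpa using hn)]
    linear_combination (-2 * A n * B n + p * (B n)^2) * hpi
  rw [hS, Finset.sum_sub_distrib, Finset.sum_add_distrib, Finset.sum_add_distrib,
    ← Finset.mul_sum, ← Finset.mul_sum, ← Finset.mul_sum, q3, q2, q1]
  simp only [Finset.sum_const, Finset.card_range, nsmul_eq_mul, mul_one]
  linear_combination (A (2*r)^2 + 4*A (2*r) + 4 -2*B (2*r)) * hpi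

lemma SS_last (p r : ℕ) (hpp : p.Prime) (hp : p = 2*r+1) (hr : 1 ≤ r) :
    (p:ℤ)^3 ∣ SS p (p-1) + p + 2*(p:ℤ)^2 := by
  have h := SS_last_ring (R := ZMod (p^3)) p r hp hr
    (by have := ZMod.natCast_self (p^3); push_cast at this; exact this)
    (fun k => ((k:ℕ) : ZMod (p^3))⁻¹) (by simp [ZMod.inv_zero])
    (fun k h1 h2 => ZMod.coe_mul_inv_eq_one k
      (Nat.Coprime.pow_right 3 ((hpp.coprime_iff_not_dvd.2 (Nat.not_dvd_of_pos_of_lt (by omega) h2)).symm)))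
  have h2 : ((SS p (p-1) + p + 2*(p:ℤ)^2 : ℤ) : ZMod (p^3)) = 0 := by
    push_cast
    rw [h]; ring
  rw [ZMod.intCast_zmod_eq_zero_iff_dvd] at h2
  exact_mod_cast h2

lemma int_not_dvd {p k : ℕ} (h1 : 1 ≤ k) (h2 : k < p) : ¬ (p:ℤ) ∣ (k:ℤ) := by
  intro h
  have := Nat.le_of_dvd (by omega) (Int.natCast_dvd_natCast.1 h)
  omega

lemma dvd_cancel_pow {p : ℕ} (hpp : p.Prime) (s : ℕ) {a b : ℤ} (ha : ¬ (p:ℤ) ∣ a)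
    (h : (p:ℤ)^s ∣ a * b) : (p:ℤ)^s ∣ b := by
  have hc : IsCoprime ((p:ℤ)^s) a :=
    IsCoprime.pow_left ((Nat.prime_iff_prime_int.1 hpp).coprime_iff_not_dvd.2 ha)
  exact hc.dvd_of_dvd_mul_left h

lemma TT_p (p j : ℕ) (hpp : p.Prime) (hj : j < p) : (p:ℤ) ∣ TT j p - 1 := by
  unfold TT bt
  rw [Finset.sum_range_succ']
  simp only [Nat.choose_zero_right, cc_zero, Nat.cast_one, mul_one, add_sub_cancel_right]
  apply Finset.dvd_sum
  intro k hk
  simp only [Finset.mem_range] at hk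
  rcases Nat.lt_or_ge (k+1) p with h | h
  · exact Dvd.dvd.mul_right (Int.natCast_dvd_natCast.2 (hpp.dvd_choose_self (by omega) h)) _
  · have : cc j (k+1) = 0 := by
      unfold cc
      rw [Nat.choose_eq_zero_of_lt (by omega)]; simp
    rw [this]; simp

lemma TT_symm (p i j : ℕ) (hpp : p.Prime) (hij : i + j + 1 = p) :
    (p:ℤ) ∣ TT i (p-1) - TT j (p-1) := by
  have hcc : ∀ k, k < p → (p:ℤ) ∣ cc i k - cc j k := by
    intro k
    induction k with
    | zero => intro _; simp [cc_zero]
    | succ k ih =>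
      intro hk
      have ih := ih (by omega)
      have h0 : ¬ (p:ℤ) ∣ ((k:ℤ)+1)^2 := by
        intro h
        have := (Nat.prime_iff_prime_int.1 hpp).dvd_of_dvd_pow h
        exact int_not_dvd (k := k+1) (by omega) hk (by exact_mod_cast this)
      have h1 := cc_rec i k
      have h2 := cc_rec j k
      have hi : (i:ℤ) = p - 1 - j := by omega
      have : (p:ℤ)^1 ∣ ((k:ℤ)+1)^2 * (cc i (k+1) - cc j (k+1)) := by
        obtain ⟨z, hz⟩ := ih
        rw [pow_one, mul_sub, h1, h2, hi]
        refine ⟨2 * ((p - 1 - 2*j) * cc i k) + 2 * ((j:ℤ)*(j+1) - k*(k+1)) * z, ?_⟩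
        linear_combination 2 * ((j:ℤ)*(j+1) - k*(k+1)) * hz
      have := dvd_cancel_pow hpp 1 h0 this
      simpa using this
  unfold TT
  rw [← bt_sub]
  unfold bt
  apply Finset.dvd_sum
  intro k hk
  simp only [Finset.mem_range] at hk
  exact Dvd.dvd.mul_left (hcc k (by omega)) _

lemma not_dvd_two_pow_mul {p : ℕ} (hpp : p.Prime) (hp2 : p ≠ 2) {j : ℕ} (h1 : 1 ≤ j) (h2 : j < p)
    (s : ℕ) : ¬ (p:ℤ) ∣ 2^s * (j:ℤ) := by
  intro h
  have hP := Nat.prime_iff_prime_int.1 hpp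
  rcases hP.dvd_or_dvd h with h | h
  · have h3 := hP.dvd_of_dvd_pow h
    have h4 : p ∣ 2 := by exact_mod_cast h3
    exact hp2 ((Nat.prime_dvd_prime_iff_eq hpp Nat.prime_two).1 h4)
  · exact int_not_dvd h1 h2 h

/-- The key relation. -/
lemma SS_g (p : ℕ) (hpp : p.Prime) (hp2 : p ≠ 2) (j : ℕ) (hj : j + 1 < p) :
    ∃ g : ℤ, (2*(j:ℤ)+3)*SS p (j+1) + (2*j+1)*SS p j = (p:ℤ)^2 * g ∧
      4*((j:ℤ)+1)*g = 4*(TT (j+1) (p-1) + TT j (p-1))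
          *((TT (j+1) p + TT j p) - (TT (j+1) (p-1) + TT j (p-1)))
        - ((TT (j+1) p - TT j p) - (TT (j+1) (p-1) - TT j (p-1)))^2 := by
  obtain ⟨q, hq⟩ : ∃ q, p = q + 1 := ⟨p-1, by omega⟩
  have h := SS_tel p j
  have ha := TT_a j q
  have hd := TT_d j q
  have hq1 : p - 1 = q := by omega
  have hqc : (q:ℤ)+1 = p := by rw [hq]; push_cast; ring
  rw [← hq, hqc] at ha hd
  rw [hq1]
  have key : 4*((j:ℤ)+1)*((2*(j:ℤ)+3)*SS p (j+1) + (2*j+1)*SS p j) = (p:ℤ)^2 *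
      (4*(TT (j+1) q + TT j q) * ((TT (j+1) p + TT j p) - (TT (j+1) q + TT j q))
        - ((TT (j+1) p - TT j p) - (TT (j+1) q - TT j q))^2) := by
    rw [h, ← hd]
    generalize TT (j+1) p = t1 at *
    generalize TT j p = t0 at *
    generalize TT (j+1) q = u1 at *
    generalize TT j q = u0 at *
    linear_combination (-4*(p:ℤ)*(t1+t0) + 4*(p*(t1+t0-(u1+u0)) + (j+1)*(t1-t0))) * ha
  have hdv : (p:ℤ)^2 ∣ (2*(j:ℤ)+3)*SS p (j+1) + (2*j+1)*SS p j := by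
    have hn := not_dvd_two_pow_mul hpp hp2 (j := j+1) (by omega) hj 2
    refine dvd_cancel_pow hpp 2 hn ?_
    have h3 := Dvd.intro _ key.symm
    have h4 : (2:ℤ)^2 * ((j+1:ℕ):ℤ) * ((2*(j:ℤ)+3)*SS p (j+1) + (2*j+1)*SS p j)
        = 4*((j:ℤ)+1)*((2*(j:ℤ)+3)*SS p (j+1) + (2*j+1)*SS p j) := by
      push_cast; ring
    rw [h4]
    exact h3
  obtain ⟨g, hg⟩ := hdv
  refine ⟨g, hg, ?_⟩
  have hp0 : (p:ℤ)^2 ≠ 0 := by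
    have := hpp.pos
    positivity
  apply mul_left_cancel₀ hp0
  rw [← key, hg]; ring

lemma SS_zero (N : ℕ) : SS N 0 = N := by
  have h : ∀ n, TT 0 n = 1 := by
    intro n
    unfold TT bt
    rw [Finset.sum_range_succ']
    simp [cc]
  simp [SS, h]

lemma SS_main (p r : ℕ) (hpp : p.Prime) (hp : p = 2*r+1) (hr : 1 ≤ r) :
    (∀ j, j < p → (p:ℤ)^2 ∣ (2*(j:ℤ)+1) * SS p j - (-1)^j * p) ∧
    (p:ℤ)^2 ∣ SS p r - (-1)^r := by
  have hp2 : p ≠ 2 := by omega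
  have hp0 : (p:ℤ) ≠ 0 := by have := hpp.pos; positivity
  choose! g hg1 hg2 using SS_g p hpp hp2
  have hH : ∀ j, j < p → (2*(j:ℤ)+1) * SS p j
      = (-1)^j * (p + (p:ℤ)^2 * ∑ i ∈ Finset.range j, (-1)^(i+1) * g i) := by
    intro j
    induction j with
    | zero => intro _; simp [SS_zero]
    | succ j ih =>
      intro hj
      have ih := ih (by omega)
      have h1 := hg1 j hj
      rw [Finset.sum_range_succ]
      have hs : ((-1:ℤ)^j)^2 = 1 := by rw [← pow_mul, mul_comm, pow_mul]; simp
      push_cast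
      rw [pow_succ]
      generalize (-1:ℤ)^j = e at *
      linear_combination h1 - ih - (p:ℤ)^2 * g j * hs
  refine ⟨fun j hj => ?_, ?_⟩
  · rw [hH j hj]
    exact ⟨(-1)^j * ∑ i ∈ Finset.range j, (-1)^(i+1) * g i, by ring⟩
  -- symmetry of g
  have hsym : ∀ i j, i + j + 2 = p → (p:ℤ) ∣ g i + g j := by
    intro i j hij
    have hi := hg2 i (by omega)
    have hj := hg2 j (by omega)
    have a1 := TT_symm p (i+1) j hpp (by omega)
    have a2 := TT_symm p i (j+1) hpp (by omega)
    have b1 := TT_p p (i+1) hpp (by omega)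
    have b2 := TT_p p i hpp (by omega)
    have b3 := TT_p p (j+1) hpp (by omega)
    have b4 := TT_p p j hpp (by omega)
    have hn := not_dvd_two_pow_mul hpp hp2 (j := i+1) (by omega) (by omega) 2
    have hjc : (j:ℤ) = p - 2 - i := by omega
    have : (p:ℤ)^1 ∣ (2^2 * ((i+1:ℕ):ℤ)) * (g i + g j) := by
      rw [pow_one]
      obtain ⟨y1, a1⟩ := a1
      obtain ⟨y2, a2⟩ := a2
      obtain ⟨z1, b1⟩ := b1
      obtain ⟨z2, b2⟩ := b2
      obtain ⟨z3, b3⟩ := b3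
      obtain ⟨z4, b4⟩ := b4
      have e1 : TT (i+1) (p-1) = TT j (p-1) + p*y1 := by linear_combination a1
      have e2 : TT i (p-1) = TT (j+1) (p-1) + p*y2 := by linear_combination a2
      have f1 : TT (i+1) p = 1 + p*z1 := by linear_combination b1
      have f2 : TT i p = 1 + p*z2 := by linear_combination b2
      have f3 : TT (j+1) p = 1 + p*z3 := by linear_combination b3
      have f4 : TT j p = 1 + p*z4 := by linear_combination b4
      rw [e1, e2, f1, f2] at hi
      rw [f3, f4, hjc] at hj
      push_cast
      have : (4 * ((i:ℤ)+1)) * (g i + g j) = 4*((i:ℤ)+1) * g i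
        - 4*((p:ℤ) - 2 - i + 1) * g j + p * (4 * g j) := by ring
      rw [this, hi, hj]
      generalize TT (j+1) (p-1) = u1
      generalize TT j (p-1) = u0
      apply (Int.modEq_zero_iff_dvd).1
      have hz : (p:ℤ) ≡ 0 [ZMOD p] := by simp [Int.ModEq]
      calc _ ≡ 4*(u0 + 0*y1 + (u1+0*y2)) * ((1 + 0*z1 + (1+0*z2)) - (u0 + 0*y1 + (u1+0*y2)))
            - ((1 + 0*z1 - (1+0*z2)) - (u0 + 0*y1 - (u1+0*y2)))^2
            - (4*(u1+u0)*((1+0*z3+(1+0*z4)) - (u1+u0))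
              - ((1+0*z3-(1+0*z4)) - (u1-u0))^2) + 0 * (4*g j) [ZMOD p] := by gcongr
        _ = 0 := by ring
    have := dvd_cancel_pow hpp 1 hn this
    simpa using this
  -- total sum
  have hlast := SS_last p r hpp hp hr
  have hHl := hH (p-1) (by omega)
  have hHr := hH r (by omega)
  have hpm : ((p-1:ℕ):ℤ) = p - 1 := by omega
  have hev : (-1:ℤ)^(p-1) = 1 := by
    rw [show p - 1 = 2*r by omega, pow_mul]; simp
  rw [hpm, hev] at hHl
  have hsplit : (p:ℤ) ∣ ∑ i ∈ Finset.range (p-1), (-1)^(i+1) * g i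
      - 2 * ∑ i ∈ Finset.range r, (-1)^(i+1) * g i := by
    have e : p - 1 = r + r := by omega
    rw [e, Finset.sum_range_add, two_mul, add_sub_add_left_eq_sub,
      ← Finset.sum_range_reflect (fun x => (-1:ℤ)^(r+x+1) * g (r+x)) r, ← Finset.sum_sub_distrib]
    apply Finset.dvd_sum
    intro i hi
    simp only [Finset.mem_range] at hi
    have h1 := hsym (r + (r-1-i)) i (by omega)
    have h2 : (-1:ℤ)^(r + (r-1-i)+1) = -(-1)^(i+1) := by
      have : (-1:ℤ)^(r + (r-1-i)+1) * (-1)^(i+1) = -1 := by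
        rw [← pow_add, show r + (r-1-i)+1 + (i+1) = 2*r+1 by omega, pow_succ, pow_mul]; simp
      rcases neg_one_pow_eq_or ℤ (i+1) with h | h <;> rw [h] at this ⊢ <;> linarith
    rw [h2]
    have h3 : -(-1:ℤ)^(i+1) * g (r + (r-1-i)) - (-1)^(i+1) * g i
        = (g (r + (r-1-i)) + g i) * (-(-1)^(i+1)) := by ring
    rw [h3]
    exact Dvd.dvd.mul_right h1 _
  have hG : (p:ℤ) ∣ ∑ i ∈ Finset.range (p-1), (-1)^(i+1) * g i := by
    obtain ⟨z, hz⟩ := hlast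
    generalize ∑ i ∈ Finset.range (p-1), (-1)^(i+1) * g i = G at *
    refine ⟨(2*p-1)*z - 4, ?_⟩
    have hp02 : (p:ℤ)^2 ≠ 0 := by positivity
    apply mul_left_cancel₀ hp02
    linear_combination (2*(p:ℤ)-1) * hz - hHl
  have hG2 : (p:ℤ) ∣ ∑ i ∈ Finset.range r, (-1)^(i+1) * g i := by
    have h1 := dvd_sub hG hsplit
    rw [sub_sub_cancel] at h1
    have hn : ¬ (p:ℤ) ∣ ((2:ℕ):ℤ) := int_not_dvd (by norm_num) (by omega)
    have := dvd_cancel_pow hpp 1 hn (by rw [pow_one]; exact_mod_cast h1)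
    simpa using this
  obtain ⟨z, hz⟩ := hG2
  have hpr : 2*(r:ℤ)+1 = p := by rw [hp]; push_cast; ring
  rw [hz, hpr] at hHr
  refine ⟨(-1)^r * z, ?_⟩
  apply mul_left_cancel₀ hp0
  linear_combination hHr

lemma TT_zero_left (n : ℕ) : TT 0 n = 1 := by
  unfold TT bt
  rw [Finset.sum_range_succ']
  simp [cc]

lemma TT_one_left (n : ℕ) : TT 1 n = 1 + 4*n := by
  induction n with
  | zero => simp [TT_zero]
  | succ n ih =>
    have h : TT 1 (n+1) = TT 1 n + bt (fun k => cc 1 (k+1)) n := bt_succ _ _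
    rw [h, ih]
    have h2 : bt (fun k => cc 1 (k+1)) n = 4 := by
      unfold bt
      rw [Finset.sum_range_succ']
      rw [Finset.sum_eq_zero]
      · simp [cc]
      · intro k _
        have h0 : Nat.choose 1 (k+1+1) = 0 := Nat.choose_eq_zero_of_lt (by omega)
        simp [cc, h0]
    rw [h2]; push_cast; ring

lemma VV_zero (N : ℕ) : VV N 0 = 4*(N:ℤ)^2 + N := by
  unfold VV
  simp only [TT_zero_left]
  induction N with
  | zero => simp
  | succ n ih => rw [Finset.sum_range_succ, ih]; push_cast; ring

lemma VV_one (N : ℕ) : VV N 1 = 32*(N:ℤ)^2*(N-1)^2 + 48*(N:ℤ)^2*(N-1) + 5*N := by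
  unfold VV
  simp only [TT_one_left]
  induction N with
  | zero => simp
  | succ n ih => rw [Finset.sum_range_succ, ih]; push_cast; ring

lemma VV_main (p r : ℕ) (hpp : p.Prime) (hp : p = 2*r+1) (hr : 1 ≤ r) :
    ∀ j, j ≤ r → (p:ℤ)^2 ∣ VV p j - (2*p - (-1)^j*(2*j+1)*p) := by
  have hp2 : p ≠ 2 := by omega
  intro j
  induction j with
  | zero => intro _; rw [VV_zero]; exact ⟨4, by push_cast; ring⟩
  | succ j ih =>
    intro hj
    rcases j with _ | j
    · rw [VV_one]; exact ⟨32*((p:ℤ)-1)^2 + 48*((p:ℤ)-1), by push_cast; ring⟩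
    have ih := ih (by omega)
    have hS := (SS_main p r hpp hp hr).1
    have s1 := hS (j+1) (by omega)
    have s2 := hS (j+1+1) (by omega)
    have htel := VV_tel p (j+1)
    obtain ⟨q, hq⟩ : ∃ q, p = q + 1 := ⟨p-1, by omega⟩
    have ha := TT_a (j+1) q
    have hd := TT_d (j+1) q
    have hqc : (q:ℤ)+1 = p := by rw [hq]; push_cast; ring
    rw [← hq, hqc] at ha hd
    have hd1 : (p:ℤ) ∣ TT (j+1+1) p - TT (j+1) p := by
      have hn : ¬ (p:ℤ) ∣ ((j+1+1 : ℕ):ℤ) := int_not_dvd (by omega) (by omega)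
      have := dvd_cancel_pow hpp 1 hn (b := TT (j+1+1) p - TT (j+1) p)
        (by rw [pow_one]; refine Dvd.intro _ (ha.trans ?_); push_cast; ring)
      simpa using this
    have he1 : (p:ℤ) ∣ EE (j+1) p := Dvd.intro _ hd
    have hK : (p:ℤ)^2 ∣ VV p (j+1+1) - VV p (j+1)
        - (1-4*((j:ℤ)+1+1)^2)*(SS p (j+1+1) - SS p (j+1)) := by
      have hn1 := not_dvd_two_pow_mul hpp hp2 (j := j+1+1) (by omega) (by omega) 1
      have hn2 : ¬ (p:ℤ) ∣ ((j+1 : ℕ):ℤ) := int_not_dvd (by omega) (by omega)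
      have hn3 : ¬ (p:ℤ) ∣ ((j+3 : ℕ):ℤ) := int_not_dvd (by omega) (by omega)
      apply dvd_cancel_pow hpp 2 hn2
      apply dvd_cancel_pow hpp 2 hn3
      apply dvd_cancel_pow hpp 2 hn1
      obtain ⟨d1, hd1⟩ := hd1
      obtain ⟨e1, he1⟩ := he1
      rw [hd1, he1] at htel
      generalize TT (j+1+1) p + TT (j+1) p = a at htel
      push_cast at htel ⊢
      generalize VV p (j+1+1) - VV p (j+1)
        - (1-4*((j:ℤ)+1+1)^2)*(SS p (j+1+1) - SS p (j+1)) = W at *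
      generalize (j:ℤ) = x at *
      refine ⟨2*(x+1+1)*(2*(x+1+1)*a^2 - (4*(x+1+1)^2+4*p)*(a*d1)
        + (2*(x+1+1)^3+(2*(x+1+1)^3+2*(x+1+1))*p+2*(x+1+1)*p^2)*d1^2
        + 2*a*e1 - (2*(x+1+1)^3+2*(x+1+1)*p)*d1*e1) + e1^2, ?_⟩
      linear_combination htel
    obtain ⟨z, hz⟩ := ih
    obtain ⟨y1, s1⟩ := s1
    obtain ⟨y2, s2⟩ := s2
    obtain ⟨k, hk⟩ := hK
    push_cast at *
    rw [pow_succ (-1:ℤ) (j+1)] at *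
    generalize (-1:ℤ)^(j+1) = e at *
    refine ⟨z + k + (1-2*((j:ℤ)+1+1))*y2 + (1+2*((j:ℤ)+1+1))*y1, ?_⟩
    linear_combination hz + hk + (1-2*((j:ℤ)+1+1))*s2 + (1+2*((j:ℤ)+1+1))*s1

lemma int_main (p r : ℕ) (hpp : p.Prime) (hp : p = 2*r+1) (hr : 1 ≤ r) :
    (p:ℤ)^2 ∣ 8 * ∑ n ∈ Finset.range p, ((n:ℤ)+1) * (TT r n)^2 - (2*p + 3*(-1)^r) := by
  have h1 := (SS_main p r hpp hp hr).2
  have h2 := VV_main p r hpp hp hr r le_rfl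
  have h3 : 8 * ∑ n ∈ Finset.range p, ((n:ℤ)+1) * (TT r n)^2 = VV p r + 3 * SS p r := by
    unfold VV SS
    rw [Finset.mul_sum, Finset.mul_sum, ← Finset.sum_add_distrib]
    exact Finset.sum_congr rfl fun n _ => by ring
  have hpr : 2*(r:ℤ)+1 = p := by rw [hp]; push_cast; ring
  rw [hpr] at h2
  rw [h3]
  obtain ⟨x, hx⟩ := h1
  obtain ⟨y, hy⟩ := h2
  exact ⟨y + 3*x - (-1)^r, by linear_combination hy + 3 * hx⟩

/-- p-adic version of `cc`. -/
noncomputable def cp {p : ℕ} [Fact p.Prime] (x : ℚ_[p]) (k : ℕ) : ℚ_[p] :=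
  gbinom x k * gbinom (x + (k : ℚ_[p])) k * 2^k

lemma cp_rec {p : ℕ} [Fact p.Prime] (x : ℚ_[p]) (k : ℕ) :
    ((k : ℚ_[p])+1)^2 * cp x (k+1) = 2 * (x*(x+1) - k*(k+1)) * cp x k := by
  have hk : ((k : ℚ_[p])+1) ≠ 0 := by exact_mod_cast Nat.succ_ne_zero k
  have hf : (k.factorial : ℚ_[p]) ≠ 0 := by exact_mod_cast Nat.factorial_ne_zero k
  have h1 : ((k : ℚ_[p])+1) * gbinom x (k+1) = (x - k) * gbinom x k := by
    unfold gbinom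
    rw [Finset.prod_range_succ, Nat.factorial_succ]
    push_cast
    field_simp
  have h2 : ((k : ℚ_[p])+1) * gbinom (x + ((k+1:ℕ) : ℚ_[p])) (k+1)
      = (x + k + 1) * gbinom (x + (k : ℚ_[p])) k := by
    unfold gbinom
    rw [Finset.prod_range_succ', Nat.factorial_succ]
    have : ∏ i ∈ Finset.range k, (x + ((k+1:ℕ) : ℚ_[p]) - ((i+1:ℕ) : ℚ_[p]))
        = ∏ i ∈ Finset.range k, (x + (k : ℚ_[p]) - (i : ℚ_[p])) :=
      Finset.prod_congr rfl fun i _ => by push_cast; ring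
    rw [this]
    push_cast
    field_simp
    ring
  unfold cp
  rw [pow_succ]
  calc _ = (((k : ℚ_[p])+1) * gbinom x (k+1)) *
        (((k : ℚ_[p])+1) * gbinom (x + ((k+1:ℕ) : ℚ_[p])) (k+1)) * (2^k*2) := by ring
    _ = _ := by rw [h1, h2]; ring

lemma cp_zero {p : ℕ} [Fact p.Prime] (x : ℚ_[p]) : cp x 0 = 1 := by simp [cp, gbinom]

lemma norm_natCast_one {p : ℕ} [Fact p.Prime] {k : ℕ} (h1 : 1 ≤ k) (h2 : k < p) :
    ‖(k : ℚ_[p])‖ = 1 := by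
  rw [Padic.norm_natCast_eq_one_iff]
  exact (((Fact.out : p.Prime).coprime_iff_not_dvd).2 (Nat.not_dvd_of_pos_of_lt (by omega) h2))

lemma cp_close {p : ℕ} [Fact p.Prime] (r : ℕ) (hp : p = 2*r+1) (hr : 1 ≤ r) (x : ℚ_[p])
    (hx : ‖x‖ ≤ 1) (h2x : ‖2*x + 1‖ ≤ (p : ℝ)⁻¹) (k : ℕ) (hk : k < p) :
    ‖cp x k - ((cc r k : ℤ) : ℚ_[p])‖ ≤ ((p : ℝ)⁻¹)^2 := by
  have hP : ‖(p : ℚ_[p])‖ = (p:ℝ)⁻¹ := Padic.norm_p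
  have h2 : ‖(2 : ℚ_[p])‖ = 1 := by
    have := norm_natCast_one (p := p) (k := 2) (by norm_num) (by omega)
    exact_mod_cast this
  have hxr : ‖x*(x+1) - (r:ℚ_[p])*(r+1)‖ ≤ ((p : ℝ)⁻¹)^2 := by
    have e : 2*2*(x*(x+1) - (r:ℚ_[p])*(r+1)) = (2*x+1)^2 - (p:ℚ_[p])^2 := by
      have : (p:ℚ_[p]) = 2*r+1 := by
        have := congrArg (Nat.cast (R := ℚ_[p])) hp
        push_cast at this
        exact this
      rw [this]; ring
    have e2 := congrArg norm e
    rw [norm_mul, norm_mul, h2, one_mul, one_mul] at e2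
    rw [e2]
    rw [sub_eq_add_neg]
    refine (Padic.nonarchimedean _ _).trans (max_le ?_ ?_)
    · rw [norm_pow]; gcongr
    · rw [norm_neg, norm_pow, hP]
  induction k with
  | zero => simp [cp_zero, cc_zero]
  | succ k ih =>
    have ih := ih (by omega)
    have h1 := cp_rec x k
    have h3 := congrArg (Int.cast (R := ℚ_[p])) (cc_rec r k)
    push_cast at h3
    have hk1 : ‖((k : ℚ_[p])+1)‖ = 1 := by
      have := norm_natCast_one (p := p) (k := k+1) (by omega) hk
      exact_mod_cast this
    have e : ((k : ℚ_[p])+1)^2 * (cp x (k+1) - ((cc r (k+1) : ℤ) : ℚ_[p]))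
        = 2 * ((x*(x+1) - k*(k+1)) * (cp x k - ((cc r k : ℤ) : ℚ_[p]))
          + (x*(x+1) - (r:ℚ_[p])*(r+1)) * ((cc r k : ℤ) : ℚ_[p])) := by
      linear_combination h1 - h3
    have e2 := congrArg norm e
    rw [norm_mul, norm_pow, hk1, one_pow, one_mul, norm_mul, h2, one_mul] at e2
    rw [e2]
    have hxx : ‖x*(x+1) - (k:ℚ_[p])*(k+1)‖ ≤ 1 := by
      have hx' : x*(x+1) - (k:ℚ_[p])*(k+1) = ((⟨x, hx⟩ * (⟨x, hx⟩+1) - k*(k+1) : ℤ_[p]) : ℚ_[p]) := by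
        push_cast; rfl
      rw [hx']
      exact PadicInt.norm_le_one _
    refine (Padic.nonarchimedean _ _).trans (max_le ?_ ?_)
    · rw [norm_mul]
      calc _ ≤ 1 * ((p : ℝ)⁻¹)^2 := by gcongr
        _ = _ := one_mul _
    · rw [norm_mul]
      calc _ ≤ ((p : ℝ)⁻¹)^2 * 1 := by gcongr; exact Padic.norm_int_le_one _
        _ = _ := mul_one _

lemma tseq_close {p : ℕ} [Fact p.Prime] (r : ℕ) (hp : p = 2*r+1) (hr : 1 ≤ r) (x : ℚ_[p])
    (hx : ‖x‖ ≤ 1) (h2x : ‖2*x + 1‖ ≤ (p : ℝ)⁻¹) (n : ℕ) (hn : n < p) :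
    ‖tseq x n - ((TT r n : ℤ) : ℚ_[p])‖ ≤ ((p : ℝ)⁻¹)^2 := by
  have e : tseq x n - ((TT r n : ℤ) : ℚ_[p]) = ∑ k ∈ Finset.range (n+1),
      (n.choose k : ℚ_[p]) * (cp x k - ((cc r k : ℤ) : ℚ_[p])) := by
    unfold TT tseq
    rw [cast_bt]
    unfold bt
    rw [← Finset.sum_sub_distrib]
    exact Finset.sum_congr rfl fun k _ => by unfold cp; ring
  rw [e]
  refine IsUltrametricDist.norm_sum_le_of_forall_le_of_nonneg (by positivity) fun k hk => ?_
  simp only [Finset.mem_range] at hk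
  rw [norm_mul]
  calc _ ≤ 1 * ((p : ℝ)⁻¹)^2 := by
        gcongr
        · exact_mod_cast Padic.norm_int_le_one (n.choose k : ℤ)
        · exact cp_close r hp hr x hx h2x k (by omega)
    _ = _ := one_mul _

theorem stmt_16 (p : ℕ) [Fact p.Prime] (hp : p ≠ 2) (x : ℚ_[p]) (hx : ‖x‖ ≤ 1)
    (h2x : ‖2*x + 1‖ ≤ (p : ℝ)⁻¹) :
    ‖(∑ n ∈ Finset.range p, ((n : ℚ_[p]) + 1) * (tseq x n)^2) -
        ((p : ℚ_[p])/4 + (3/8) * (-1)^((p-1)/2))‖ ≤ (p : ℝ) ^ (-2 : ℤ) := by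
  have hpp : p.Prime := Fact.out
  obtain ⟨r, hr⟩ : ∃ r, p = 2*r+1 := by
    rcases hpp.eq_two_or_odd' with h | h
    · exact absurd h hp
    · exact h
  have hr1 : 1 ≤ r := by
    have := hpp.two_le
    omega
  have hr2 : (p-1)/2 = r := by omega
  rw [hr2]
  have hpow : (p : ℝ) ^ (-2 : ℤ) = ((p : ℝ)⁻¹)^2 := by
    rw [zpow_neg, inv_pow]; norm_cast
  rw [hpow]
  have hple : ((p : ℝ)⁻¹)^2 ≤ 1 := by
    apply pow_le_one₀ (by positivity)
    apply inv_le_one_of_one_le₀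
    exact_mod_cast hpp.one_le
  have h2 : ‖(2 : ℚ_[p])‖ = 1 := by
    have := norm_natCast_one (p := p) (k := 2) (by norm_num) (by omega)
    exact_mod_cast this
  have h8 : ‖(8 : ℚ_[p])‖ = 1 := by
    rw [show (8 : ℚ_[p]) = 2*2*2 by norm_num, norm_mul, norm_mul, h2]; norm_num
  obtain ⟨z, hz⟩ := int_main p r hpp hr hr1
  have hz' := congrArg (Int.cast (R := ℚ_[p])) hz
  push_cast at hz'
  have e : (∑ n ∈ Finset.range p, ((n : ℚ_[p]) + 1) * (tseq x n)^2) -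
        ((p : ℚ_[p])/4 + (3/8) * (-1)^r)
      = ∑ n ∈ Finset.range p, ((n : ℚ_[p]) + 1) * ((tseq x n)^2 - ((TT r n : ℤ) : ℚ_[p])^2)
        + (p:ℚ_[p])^2 * z / 8 := by
    rw [← hz']
    simp only [mul_sub, Finset.sum_sub_distrib]
    ring
  rw [e]
  refine (Padic.nonarchimedean _ _).trans (max_le ?_ ?_)
  · refine IsUltrametricDist.norm_sum_le_of_forall_le_of_nonneg (by positivity) fun n hn => ?_
    simp only [Finset.mem_range] at hn
    have hc := tseq_close r hr hr1 x hx h2x n hn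
    have hT : ‖((TT r n : ℤ) : ℚ_[p])‖ ≤ 1 := Padic.norm_int_le_one _
    have ht : ‖tseq x n + ((TT r n : ℤ) : ℚ_[p])‖ ≤ 1 := by
      have e3 : tseq x n + ((TT r n : ℤ) : ℚ_[p])
          = (tseq x n - ((TT r n : ℤ) : ℚ_[p])) + ((2 * TT r n : ℤ) : ℚ_[p]) := by
        push_cast; ring
      rw [e3]
      exact (Padic.nonarchimedean _ _).trans
        (max_le (hc.trans hple) (Padic.norm_int_le_one _))
    have hn1 : ‖((n : ℚ_[p]) + 1)‖ ≤ 1 := by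
      exact_mod_cast Padic.norm_int_le_one (p := p) ((n+1 : ℕ) : ℤ)
    rw [sq_sub_sq, norm_mul, norm_mul]
    calc _ ≤ 1 * (1 * ((p : ℝ)⁻¹)^2) := by gcongr
      _ = _ := by ring
  · rw [norm_div, h8, div_one, norm_mul, norm_pow, Padic.norm_p]
    calc _ ≤ ((p : ℝ)⁻¹)^2 * 1 := by gcongr; exact Padic.norm_int_le_one _
      _ = _ := mul_one _
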